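/- Assume λ is strictly decreasing with λ_p > 0. Then the subdifferential of J is constant along M near x: for every u = Σ_{k=1}^m c'_k v_k with c'_1, …, c'_m ∈ ℝ (c'_m = 0 if c_m = 0) and ‖u − x‖_∞ < ε_c/2, one has ∂J(u) = ∂J(x). -/

import Mathlib

open Finset Filter

noncomputable section

/-- The sign of a real number, with the convention `sgn 0 = 1`. -/
def sgn (t : ℝ) : ℝ := if t < 0 then -1 else 1

/-- A permutation sorting the absolute values of `β` in nonincreasing order. -/
def sortPerm {p : ℕ} (β : Fin p → ℝ) : Equiv.Perm (Fin p) :=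
  (Fin.revPerm).trans (Tuple.sort fun j => |β j|)

/-- The sorted ℓ₁ norm `J(β) = Σ_j λ_j |β|_(j)`. -/
def sortedL1 {p : ℕ} (lam β : Fin p → ℝ) : ℝ :=
  ∑ j, lam j * |β (sortPerm β j)|

/-- `β(z)`: the vector obtained from `β` by replacing entries of the cluster
`{i : |β i| = ck}` by `sign(β i) * z`. -/
def cupd {p : ℕ} (β : Fin p → ℝ) (ck z : ℝ) : Fin p → ℝ :=
  fun i => if |β i| = ck then sgn (β i) * z else β i

/-- The partial sorted ℓ₁ norm `H(z) = J(β(z))`. -/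
def Hfun {p : ℕ} (lam β : Fin p → ℝ) (ck : ℝ) (z : ℝ) : ℝ :=
  sortedL1 lam (cupd β ck z)

/-- `S(w) = Σ_{j ∈ C(w)} λ_{(j)⁻_w}`, where `C(w) = {j : |β(w)_j| = |w|}`. -/
def Sval {p : ℕ} (lam β : Fin p → ℝ) (ck : ℝ) (w : ℝ) : ℝ :=
  ∑ j, if |cupd β ck w j| = |w| then lam ((sortPerm (cupd β ck w))⁻¹ j) else 0

/-- squared Euclidean norm -/
def sqnorm {n : ℕ} (v : Fin n → ℝ) : ℝ := ∑ i, (v i) ^ 2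

/-- `G(z) = (1/2)‖y − Xβ(z)‖² + H(z)`. -/
def Gfun {n p : ℕ} (lam : Fin p → ℝ) (X : Matrix (Fin n) (Fin p) ℝ) (y : Fin n → ℝ)
    (β : Fin p → ℝ) (ck : ℝ) (z : ℝ) : ℝ :=
  (1/2) * sqnorm (fun i => y i - ∑ j, X i j * cupd β ck z j) + Hfun lam β ck z

/-- `x̃ = Σ_{j ∈ C_k} sign(β_j) X_{:j}`. -/
def xtil {n p : ℕ} (X : Matrix (Fin n) (Fin p) ℝ) (β : Fin p → ℝ) (ck : ℝ) : Fin n → ℝ :=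
  fun i => ∑ j, if |β j| = ck then sgn (β j) * X i j else 0

/-- `γ = c_k ω + x̃ᵀ r` where `r = y − Xβ` and `ω = ‖x̃‖²`. -/
def gam {n p : ℕ} (X : Matrix (Fin n) (Fin p) ℝ) (y : Fin n → ℝ) (β : Fin p → ℝ) (ck : ℝ) : ℝ :=
  ck * sqnorm (xtil X β ck) + ∑ i, xtil X β ck i * (y i - ∑ j, X i j * β j)

end

/-- The subdifferential of the sorted ℓ₁ norm at `x`, with the Euclidean inner product
written out as a sum. -/
def subdiffJ' {p : ℕ} (lam : Fin p → ℝ) (x : Fin p → ℝ) : Set (Fin p → ℝ) :=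
  {g | ∀ u : Fin p → ℝ, sortedL1 lam x + ∑ j, g j * (u j - x j) ≤ sortedL1 lam u}

/-- Any permutation sorting the absolute values of `z` computes the sorted ℓ₁ norm. -/
theorem sortedL1_eq_sum_of_antitone {p : ℕ} (lam z : Fin p → ℝ) (σ : Equiv.Perm (Fin p))
    (h : Antitone fun j => |z (σ j)|) : sortedL1 lam z = ∑ j, lam j * |z (σ j)| := by
  have hmono : Monotone ((fun j => |z j|) ∘ (Fin.revPerm.trans σ)) := fun a b hab =>
    h (Fin.rev_le_rev.mpr hab)
  have hsort := Tuple.comp_sort_eq_comp_iff_monotone.mpr hmono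
  refine Finset.sum_congr rfl fun j _ => ?_
  have hj := congrFun hsort j.rev
  simp only [Function.comp_apply, Equiv.trans_apply, Fin.revPerm_apply, Fin.rev_rev] at hj
  simp only [sortPerm, Equiv.trans_apply, Fin.revPerm_apply]
  rw [hj]

/-- The permutation `sortPerm z` sorts the absolute values of `z` in nonincreasing order. -/
theorem antitone_abs_comp_sortPerm {p : ℕ} (z : Fin p → ℝ) :
    Antitone fun j => |z (sortPerm z j)| := fun _ _ hab =>
  Tuple.monotone_sort (fun j => |z j|) (Fin.rev_le_rev.mpr hab)

/-- The cluster pattern of `x` refines that of `u`: signs agree, zeros of `x` are zeros of `u`,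
and the absolute values of `u` are weakly ordered as those of `x`. -/
structure PatternRefines {p : ℕ} (x u : Fin p → ℝ) : Prop where
  mul_nonneg : ∀ j, 0 ≤ x j * u j
  eq_zero : ∀ j, x j = 0 → u j = 0
  abs_le : ∀ i j, |x i| ≤ |x j| → |u i| ≤ |u j|

theorem PatternRefines.refl {p : ℕ} (x : Fin p → ℝ) : PatternRefines x x :=
  ⟨fun j => mul_self_nonneg (x j), fun _ h => h, fun _ _ h => h⟩

theorem abs_add_mul_of_mul_nonneg {a b s : ℝ} (hab : 0 ≤ a * b) (hs : |s * b| ≤ |a|) :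
    |a + s * b| = |a| + s * |b| := by
  rcases lt_trichotomy a 0 with ha | rfl | ha
  · have hb : b ≤ 0 := by nlinarith
    rw [abs_of_neg ha] at hs ⊢
    rw [abs_of_nonpos hb, abs_of_nonpos (by linarith [(_root_.abs_le.mp hs).2])]
    ring
  · have hsb : s * b = 0 := abs_nonpos_iff.mp (by rwa [abs_zero] at hs)
    rcases mul_eq_zero.mp hsb with h | h <;> simp [h]
  · have hb : 0 ≤ b := by nlinarith
    rw [abs_of_pos ha] at hs ⊢
    rw [abs_of_nonneg hb, abs_of_nonneg (by linarith [(_root_.abs_le.mp hs).1])]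

/-- The sorted ℓ₁ norm is affine near `x` along directions whose pattern is refined by `x`. -/
theorem PatternRefines.eventually_sortedL1_add_mul {p : ℕ} {x u : Fin p → ℝ}
    (h : PatternRefines x u) (lam : Fin p → ℝ) :
    ∀ᶠ s in nhds (0 : ℝ), sortedL1 lam (fun j => x j + s * u j)
      = sortedL1 lam x + s * sortedL1 lam u := by
  have hsmall : ∀ᶠ s in nhds (0 : ℝ), ∀ j, |s * u j| ≤ |x j| := by
    refine eventually_all.mpr fun j => ?_
    by_cases hj : x j = 0
    · simp [hj, h.eq_zero j hj]
    · have hcont : Continuous fun s : ℝ => |s * u j| := by fun_prop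
      exact (hcont.continuousAt.eventually_lt continuousAt_const
        (by simpa using hj)).mono fun s hs => hs.le
  have horder : ∀ᶠ s in nhds (0 : ℝ), ∀ i j, |x i| ≤ |x j| →
      |x i| + s * |u i| ≤ |x j| + s * |u j| := by
    refine eventually_all.mpr fun i => eventually_all.mpr fun j => ?_
    rcases lt_trichotomy |x i| |x j| with hij | hij | hij
    · have hcont₁ : Continuous fun s : ℝ => |x i| + s * |u i| := by fun_prop
      have hcont₂ : Continuous fun s : ℝ => |x j| + s * |u j| := by fun_prop
      exact (hcont₁.continuousAt.eventually_lt hcont₂.continuousAt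
        (by simpa using hij)).mono fun s hs _ => hs.le
    · have hu := le_antisymm (h.abs_le i j hij.le) (h.abs_le j i hij.ge)
      simp [hij, hu]
    · exact Eventually.of_forall fun s hle => absurd hle hij.not_ge
  filter_upwards [hsmall, horder] with s hs ho
  have habs : ∀ j, |x j + s * u j| = |x j| + s * |u j| := fun j =>
    abs_add_mul_of_mul_nonneg (h.mul_nonneg j) (hs j)
  have hx := antitone_abs_comp_sortPerm x
  rw [sortedL1_eq_sum_of_antitone lam x _ hx,
    sortedL1_eq_sum_of_antitone lam u (sortPerm x) fun a b hab => h.abs_le _ _ (hx hab),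
    sortedL1_eq_sum_of_antitone lam (fun j => x j + s * u j) (sortPerm x)
      fun a b hab => by simpa only [habs] using ho _ _ (hx hab),
    Finset.mul_sum, ← Finset.sum_add_distrib]
  refine Finset.sum_congr rfl fun j _ => ?_
  rw [habs]
  ring

/-- A subgradient at `x` supports the sorted ℓ₁ norm at every `u` whose pattern `x` refines. -/
theorem PatternRefines.sum_mul_eq_sortedL1 {p : ℕ} {lam x u g : Fin p → ℝ}
    (h : PatternRefines x u) (hg : g ∈ subdiffJ' lam x) :
    ∑ j, g j * u j = sortedL1 lam u := by
  obtain ⟨δ, hδ, hball⟩ := Metric.eventually_nhds_iff.mp (h.eventually_sortedL1_add_mul lam)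
  have hle : ∀ s : ℝ, |s| < δ → s * ∑ j, g j * u j ≤ s * sortedL1 lam u := by
    intro s hs
    have hsub := hg fun j => x j + s * u j
    rw [hball (by simpa using hs)] at hsub
    have hsum : ∑ j, g j * (x j + s * u j - x j) = s * ∑ j, g j * u j := by
      rw [Finset.mul_sum]
      exact Finset.sum_congr rfl fun j _ => by ring
    linarith
  have hpos := hle (δ / 2) (by rw [abs_of_pos] <;> linarith)
  have hneg := hle (-(δ / 2)) (by rw [abs_neg, abs_of_pos] <;> linarith)
  nlinarith

theorem PatternRefines.subdiffJ'_subset {p : ℕ} {x u : Fin p → ℝ}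
    (h : PatternRefines x u) (lam : Fin p → ℝ) : subdiffJ' lam x ⊆ subdiffJ' lam u := by
  intro g hg w
  have hx := (PatternRefines.refl x).sum_mul_eq_sortedL1 hg
  have hu := h.sum_mul_eq_sortedL1 hg
  have hw := hg w
  simp only [mul_sub, Finset.sum_sub_distrib] at hw ⊢
  linarith

theorem abs_sgn (t : ℝ) : |sgn t| = 1 := by
  unfold sgn
  split_ifs <;> simp

theorem sgn_mul_abs (t : ℝ) : sgn t * |t| = t := by
  unfold sgn
  split_ifs with h
  · rw [abs_of_neg h]; ring
  · rw [abs_of_nonneg (not_lt.mp h), one_mul]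

/-- for strictly decreasing `λ` with `λ_p > 0`, the subdifferential of `J`
is constant along the manifold `M` near `x`: `∂J(u) = ∂J(x)` for every
`u = Σ_k c'_k v_k` (with `c'_m = 0` if `c_m = 0`) such that `‖u − x‖_∞ < ε_c/2`. -/
theorem subdifferential_constant_on_manifold
    {p m : ℕ} (hp : 0 < p) (hm : 0 < m)
    (lam : Fin p → ℝ)
    (hlam_anti : StrictAnti lam)
    (hlam_last : 0 < lam ⟨p - 1, by omega⟩)
    (x : Fin p → ℝ) (c : Fin m → ℝ)
    (hc_anti : StrictAnti c) (hc_nonneg : ∀ i, 0 ≤ c i)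
    (h_attain : ∀ i, ∃ j, |x j| = c i)
    (h_cover : ∀ j, ∃ i, |x j| = c i)
    (ε : ℝ) (hε_pos : 0 < ε)
    (hε_sep : ∀ i j, i ≠ j → ε < |c i - c j|)
    (hε_min : ∀ i, c i ≠ 0 → ε < c i)
    (c' : Fin m → ℝ)
    (hc'_zero : c ⟨m - 1, by omega⟩ = 0 → c' ⟨m - 1, by omega⟩ = 0)
    (u : Fin p → ℝ)
    (hu : u = fun j => ∑ i, c' i * (if |x j| = c i then sgn (x j) else 0))
    (h_close : ∀ j, |u j - x j| < ε / 2) :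
    subdiffJ' lam u = subdiffJ' lam x := by
  choose k hk using h_cover
  have hu_eq : ∀ j, u j = c' (k j) * sgn (x j) := by
    intro j
    simp only [hu, hk j, hc_anti.injective.eq_iff, mul_ite, mul_zero]
    simp
  have hclose : ∀ i, |c' i - c i| < ε / 2 := by
    intro i
    obtain ⟨j, hj⟩ := h_attain i
    have hki : k j = i := hc_anti.injective ((hk j).symm.trans hj)
    have hdiff : u j - x j = (c' i - c i) * sgn (x j) := by
      rw [hu_eq, hki]
      nth_rewrite 2 [← sgn_mul_abs (x j)]
      rw [hj]
      ring
    simpa [hdiff, abs_mul, abs_sgn] using h_close j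
  have hzero : ∀ i, c i = 0 → c' i = 0 := by
    intro i hi
    have hlast : i = ⟨m - 1, by omega⟩ := by
      by_contra hne
      have hlt : i < ⟨m - 1, by omega⟩ := lt_of_le_of_ne (Fin.mk_le_mk.mpr (by omega)) hne
      linarith [hc_anti hlt, hc_nonneg ⟨m - 1, by omega⟩]
    subst hlast
    exact hc'_zero hi
  have hpos : ∀ i, c i ≠ 0 → 0 < c' i := fun i hi => by
    linarith [hε_min i hi, (abs_lt.mp (hclose i)).1]
  have hnonneg : ∀ i, 0 ≤ c' i := fun i => by
    by_cases hi : c i = 0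
    · exact (hzero i hi).ge
    · exact (hpos i hi).le
  have hc'_anti : StrictAnti c' := by
    intro i j hij
    have hsep := hε_sep i j hij.ne
    rw [abs_of_pos (sub_pos.mpr (hc_anti hij))] at hsep
    linarith [(abs_lt.mp (hclose i)).1, (abs_lt.mp (hclose j)).2]
  have habs : ∀ j, |u j| = c' (k j) := fun j => by
    rw [hu_eq, abs_mul, abs_sgn, mul_one, abs_of_nonneg (hnonneg _)]
  have hmul : ∀ j, 0 ≤ x j * u j := fun j => by
    have heq : x j * u j = c (k j) * c' (k j) * |sgn (x j)| ^ 2 := by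
      rw [hu_eq, sq_abs, ← hk j]
      nth_rewrite 1 [← sgn_mul_abs (x j)]
      ring
    rw [heq, abs_sgn]
    have := mul_nonneg (hc_nonneg (k j)) (hnonneg (k j))
    linarith
  have hxu : PatternRefines x u :=
    { mul_nonneg := hmul
      eq_zero := fun j hj => by rw [hu_eq, hzero (k j) (by simp [← hk j, hj]), zero_mul]
      abs_le := fun i j hij => by
        rw [hk, hk, hc_anti.le_iff_ge] at hij
        rw [habs, habs]
        exact hc'_anti.antitone hij }
  have hux : PatternRefines u x :=
    { mul_nonneg := fun j => by simpa only [mul_comm] using hmul j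
      eq_zero := fun j hj => by
        by_contra hne
        have := hpos (k j) (by simpa [← hk j] using hne)
        rw [← habs, hj, abs_zero] at this
        exact this.false
      abs_le := fun i j hij => by
        rw [habs, habs, hc'_anti.le_iff_ge] at hij
        rw [hk, hk]
        exact hc_anti.antitone hij }
  exact (hux.subdiffJ'_subset lam).antisymm (hxu.subdiffJ'_subset lam)
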